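/- For every d ≥ 1, the projective dimension over F_2 of the bipartite realization G_{SI_d} of SI_d equals d: the map assigning to each d×d matrix over F_2 its rowspan (a subspace of F_2^d) is a projective realization of G_{SI_d} of dimension d over F_2, and every projective realization of G_{SI_d} over F_2 has dimension at least d. -/

import Mathlib

/-- A projective realization of a bipartite graph over a field `F`. -/
def IsProjRealization (F : Type) [Field F] {U V : Type} (E : U → V → Prop) (D : ℕ)
    (φU : U → Submodule F (Fin D → F)) (φV : V → Submodule F (Fin D → F)) : Prop :=
  ∀ u v, E u v ↔ φU u ⊓ φV v ≠ ⊥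

/-- The row span (over `F_2`) of a `d × d` matrix over `F_2`. -/
def rowSpan (d : ℕ) (A : Matrix (Fin d) (Fin d) (ZMod 2)) :
    Submodule (ZMod 2) (Fin d → ZMod 2) :=
  Submodule.span (ZMod 2) (Set.range A)

/-- The edge relation of the bipartite realization `G_{SI_d}` of `SI_d`: both vertex
sets are the `d × d` matrices over `F_2`, with an edge `(A, B)` iff
`rowspan(A) ∩ rowspan(B) ≠ {0}`. -/
def SIedge (d : ℕ) (A B : Matrix (Fin d) (Fin d) (ZMod 2)) : Prop :=
  rowSpan d A ⊓ rowSpan d B ≠ ⊥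

/-!
In a projective realization `(φU, φV)` the neighbourhood of a vertex `u` depends only on `φU u`.
A subspace is determined by the subspaces it meets nontrivially, and every subspace of `F ^ d` is
the row space of a square matrix, so a realization in `F ^ D` yields an injection from the subspaces
of `F ^ d` into those of `F ^ D`. Over a finite field this forces `d ≤ D`: for `D < d`, `F ^ D` is
a proper subspace of `F ^ d` and so has strictly fewer subspaces.
-/

theorem injective_disjoint {α : Type*} [SemilatticeInf α] [OrderBot α] [IsAtomistic α] :
    Function.Injective (Disjoint : α → α → Prop) := by
  intro a b hab
  refine eq_iff_atom_le_iff.2 fun c hc ↦ ?_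
  rw [← hc.not_disjoint_iff_le, ← hc.not_disjoint_iff_le, disjoint_comm, hab, disjoint_comm]

/-- The row space of a matrix over any semiring, of which `rowSpan d` is the case of `d × d`
matrices over `F_2`; it lets the lower bound be stated over all finite fields. -/
def rowSpace {R m n : Type*} [Semiring R] (A : Matrix m n R) : Submodule R (n → R) :=
  Submodule.span R (Set.range A.row)

theorem rowSpace_surjective {F n : Type*} [DivisionRing F] [Finite n] :
    Function.Surjective (rowSpace : Matrix n n F → Submodule F (n → F)) := by
  classical
  cases nonempty_fintype n
  intro W
  obtain ⟨W', hW⟩ := W.exists_isCompl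
  refine ⟨LinearMap.toMatrixRight' (W.projection W' hW), ?_⟩
  rw [rowSpace, ← range_vecMulLinear]
  exact (congrArg LinearMap.range (LinearMap.toMatrixRight'.symm_apply_apply _)).trans
    (Submodule.range_projection hW)

theorem finrank_le_of_injective_submodule {F V V' : Type*} [DivisionRing F]
    [AddCommGroup V] [Module F V] [Finite V] [AddCommGroup V'] [Module F V'] [Module.Finite F V']
    {f : Submodule F V → Submodule F V'} (hf : Function.Injective f) :
    Module.finrank F V ≤ Module.finrank F V' := by
  obtain h | h := le_total (Module.finrank F V) (Module.finrank F V')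
  · exact h
  obtain ⟨g, hg⟩ := finrank_le_iff_exists_linearMap.1 h
  have map_comp_surjective : Function.Surjective (Submodule.map g ∘ f) :=
    Finite.surjective_of_injective ((Submodule.map_injective_of_injective hg).comp hf)
  obtain ⟨W, hW⟩ := map_comp_surjective ⊤
  have range_eq_top : LinearMap.range g = ⊤ := top_le_iff.1 (hW ▸ LinearMap.map_le_range)
  exact LinearMap.finrank_le_finrank_of_surjective (LinearMap.range_eq_top.1 range_eq_top)

namespace IsProjRealization

variable {F : Type} [Field F] {U V : Type} {E : U → V → Prop} {D : ℕ}
  {φU : U → Submodule F (Fin D → F)} {φV : V → Submodule F (Fin D → F)}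

theorem comp {U' V' : Type} (h : IsProjRealization F E D φU φV) (f : U' → U) (g : V' → V) :
    IsProjRealization F (fun u v ↦ E (f u) (g v)) D (φU ∘ f) (φV ∘ g) :=
  fun u v ↦ h (f u) (g v)

theorem injective_left (h : IsProjRealization F E D φU φV) (hE : Function.Injective E) :
    Function.Injective φU := by
  intro u₁ u₂ hu
  refine hE (funext fun v ↦ propext ?_)
  rw [h, h, hu]

theorem finrank_le {V : Type} [AddCommGroup V] [Module F V] [Finite V]
    {φ ψ : Submodule F V → Submodule F (Fin D → F)}
    (h : IsProjRealization F (fun W X ↦ W ⊓ X ≠ ⊥) D φ ψ) : Module.finrank F V ≤ D := by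
  have edge_injective : Function.Injective fun W X : Submodule F V ↦ W ⊓ X ≠ ⊥ := by
    intro W₁ W₂ hW
    refine injective_disjoint (funext fun X ↦ propext ?_)
    simpa only [disjoint_iff, not_iff_not] using (congrFun hW X).to_iff
  simpa only [Module.finrank_fin_fun] using
    finrank_le_of_injective_submodule (h.injective_left edge_injective)

end IsProjRealization

theorem stmt_1_general {F : Type} [Field F] [Finite F] (d : ℕ) :
    IsProjRealization F (fun A B : Matrix (Fin d) (Fin d) F ↦ rowSpace A ⊓ rowSpace B ≠ ⊥) d
        rowSpace rowSpace ∧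
      ∀ (D : ℕ) (φU φV : Matrix (Fin d) (Fin d) F → Submodule F (Fin D → F)),
        IsProjRealization F (fun A B ↦ rowSpace A ⊓ rowSpace B ≠ ⊥) D φU φV → d ≤ D := by
  refine ⟨fun _ _ ↦ Iff.rfl, fun D φU φV h ↦ ?_⟩
  choose matrixOf rowSpace_matrixOf using rowSpace_surjective (F := F) (n := Fin d)
  have h_subspaces := h.comp matrixOf matrixOf
  simp only [rowSpace_matrixOf] at h_subspaces
  simpa only [Module.finrank_fin_fun] using h_subspaces.finrank_le

/-- The projective dimension of `G_{SI_d}` over `F_2` equals `d`: the rowspan map is a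
realization of dimension `d`, and every realization has dimension at least `d`. -/
theorem stmt_1 (d : ℕ) (hd : 1 ≤ d) :
    IsProjRealization (ZMod 2) (SIedge d) d (rowSpan d) (rowSpan d) ∧
      ∀ (D : ℕ)
        (φU φV : Matrix (Fin d) (Fin d) (ZMod 2) → Submodule (ZMod 2) (Fin D → ZMod 2)),
        IsProjRealization (ZMod 2) (SIedge d) D φU φV → d ≤ D :=
  stmt_1_general d
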